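/- Let α, β, κ : ℝ → ℝ be smooth 2π-periodic functions, and suppose g : ℝ → ℝ is a smooth 2π-periodic function with g_s = (1/2) α_sss + 2 κ α_s + κ_s α. Then ∫₀^{2π} g β_s ds = ∫₀^{2π} α ((1/2) β_sss + 2 κ β_s + κ_s β) ds. -/

import Mathlib

/-- The derivative of a periodic function is periodic. -/
theorem Function.Periodic.deriv_periodic {f : ℝ → ℝ} {c : ℝ} (h : Function.Periodic f c) :
    Function.Periodic (deriv f) c := fun s => by
  rw [← deriv_comp_add_const f c s, show (fun x => f (x + c)) = f from funext h]

/-- The derivative of a smooth function is smooth. -/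
theorem ContDiff.deriv_smooth {f : ℝ → ℝ} (h : ContDiff ℝ (⊤ : ℕ∞) f) :
    ContDiff ℝ (⊤ : ℕ∞) (deriv f) :=
  (contDiff_infty_iff_deriv.1 h).2

/-- A smooth function on `ℝ` has its `deriv` as derivative everywhere. -/
theorem ContDiff.hasDerivAt_smooth {f : ℝ → ℝ} (h : ContDiff ℝ (⊤ : ℕ∞) f) (s : ℝ) :
    HasDerivAt f (deriv f s) s :=
  ((contDiff_infty_iff_deriv.1 h).1 s).hasDerivAt

/-- if `g` is a 2π-periodic antiderivative of `Ω α_s`, i.e.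
`g_s = (1/2) α_sss + 2 κ α_s + κ_s α`, then
`∫₀^{2π} g β_s ds = ∫₀^{2π} α ((1/2) β_sss + 2 κ β_s + κ_s β) ds`. -/
theorem periodic_antiderivative_pairing
    (α β κ g : ℝ → ℝ)
    (hα : ContDiff ℝ (⊤ : ℕ∞) α)
    (hβ : ContDiff ℝ (⊤ : ℕ∞) β)
    (hκ : ContDiff ℝ (⊤ : ℕ∞) κ)
    (hg : ContDiff ℝ (⊤ : ℕ∞) g)
    (hαper : ∀ s, α (s + 2 * Real.pi) = α s)
    (hβper : ∀ s, β (s + 2 * Real.pi) = β s)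
    (hκper : ∀ s, κ (s + 2 * Real.pi) = κ s)
    (hgper : ∀ s, g (s + 2 * Real.pi) = g s)
    (hgs : ∀ s, deriv g s =
      (1 / 2) * deriv (deriv (deriv α)) s + 2 * κ s * deriv α s + deriv κ s * α s) :
    ∫ s in (0 : ℝ)..(2 * Real.pi), g s * deriv β s
      = ∫ s in (0 : ℝ)..(2 * Real.pi),
          α s * ((1 / 2) * deriv (deriv (deriv β)) s + 2 * κ s * deriv β s + deriv κ s * β s) := by
  have hα₁ := hα.deriv_smooth
  have hα₂ := hα₁.deriv_smooth
  have hβ₁ := hβ.deriv_smooth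
  have hβ₂ := hβ₁.deriv_smooth
  have cα := hα.continuous
  have cβ := hβ.continuous
  have cκ := hκ.continuous
  have cg := hg.continuous
  have cβ₁ := hβ₁.continuous
  have cβ₃ := hβ₂.deriv_smooth.continuous
  have cκ₁ := hκ.deriv_smooth.continuous
  have pα₁ := Function.Periodic.deriv_periodic hαper
  have pβ₁ := Function.Periodic.deriv_periodic hβper
  -- The difference of the two integrands is the derivative of a periodic function.
  have hF (s : ℝ) : HasDerivAt
      (fun s => g s * β s
        - (1 / 2) * (deriv (deriv α) s * β s - deriv α s * deriv β s + α s * deriv (deriv β) s)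
        - 2 * (κ s * (α s * β s)))
      (g s * deriv β s
        - α s * ((1 / 2) * deriv (deriv (deriv β)) s + 2 * κ s * deriv β s + deriv κ s * β s))
      s := by
    have dα := hα.hasDerivAt_smooth s
    have dα₁ := hα₁.hasDerivAt_smooth s
    have dα₂ := hα₂.hasDerivAt_smooth s
    have dβ := hβ.hasDerivAt_smooth s
    have dβ₁ := hβ₁.hasDerivAt_smooth s
    have dβ₂ := hβ₂.hasDerivAt_smooth s
    have dκ := hκ.hasDerivAt_smooth s
    have dg := hg.hasDerivAt_smooth s
    refine (((dg.mul dβ).sub ((((dα₂.mul dβ).sub (dα₁.mul dβ₁)).add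
      (dα.mul dβ₂)).const_mul (1 / 2))).sub
      ((dκ.mul (dα.mul dβ)).const_mul 2)).congr_deriv ?_
    simp only [Pi.mul_apply]
    rw [hgs s]
    ring
  rw [← sub_eq_zero, ← intervalIntegral.integral_sub
    (Continuous.intervalIntegrable (by fun_prop) _ _)
    (Continuous.intervalIntegrable (by fun_prop) _ _),
    intervalIntegral.integral_eq_sub_of_hasDerivAt (fun s _ => hF s)
      (Continuous.intervalIntegrable (by fun_prop) _ _)]
  have eval {f : ℝ → ℝ} (hf : Function.Periodic f (2 * Real.pi)) : f (2 * Real.pi) = f 0 := hf.eq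
  rw [eval hαper, eval hβper, eval hκper, eval hgper, eval pα₁, eval pβ₁,
    eval pα₁.deriv_periodic, eval pβ₁.deriv_periodic, sub_self]
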